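/- Let P be a partial profile over a finite set A of alternatives, B a partial agenda over A, and p ∈ A. Suppose that in every completion P* of P, p is an (A ∖ Prec_B(p))-majority winner (equivalently, no completion of (P, B) makes p fail to be a majority winner of its agenda suffix). Then there exist a completion P* of P and a completion L of B such that some alternative c ∈ Prec_L(p) is a (Succ_L(c) ∪ {c})-majority winner in P* if and only if there exist an alternative c ∈ Prec_B(p) and a completion P* of P in which c is a (Succ_B(c) ∪ {c})-majority winner. -/

import Mathlib

open scoped Classical

/-- The number of voters in profile `prof` who strictly prefer `b` to `c`. -/
noncomputable def prefCount {α : Type*} {n : ℕ} (prof : Fin n → α → α → Prop) (b c : α) : ℕ :=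
  (Finset.univ.filter fun i => prof i b c).card

/-- Alternative `b` beats alternative `c`: more than `n/2` voters prefer `b` to `c`. -/
def Beats {α : Type*} {n : ℕ} (prof : Fin n → α → α → Prop) (b c : α) : Prop :=
  2 * prefCount prof b c > n

/-- `a` is an `S`-majority winner: more than `n/2` voters prefer `a`
to every alternative of `S \ {a}`. -/
def IsMajWinner {α : Type*} {n : ℕ} (prof : Fin n → α → α → Prop) (S : Finset α) (a : α) :
    Prop :=
  2 * (Finset.univ.filter fun i => ∀ c ∈ S, c ≠ a → prof i a c).card > n

/-- The successive winner for the agenda given as a list: the first alternative of the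
agenda that is a majority winner with respect to itself and all later alternatives. -/
noncomputable def succWinner {α : Type*} [DecidableEq α] {n : ℕ}
    (prof : Fin n → α → α → Prop) : List α → Option α
  | [] => none
  | a :: rest =>
    if IsMajWinner prof ((a :: rest).toFinset) a then some a
    else succWinner prof rest

/-- The amendment winner for the agenda given as a list: the current round winner is
challenged by the next alternative on the agenda, which takes over if it beats it. -/
noncomputable def amendWinner {α : Type*} {n : ℕ}
    (prof : Fin n → α → α → Prop) : List α → Option α
  | [] => none
  | a :: rest => some (rest.foldl (fun win c => if Beats prof c win then c else win) a)

/-- `comp` is a completion of the partial profile `prof`: every voter's strict partial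
order is replaced by a linear (strict total) order extending it. -/
def Completes {α : Type*} {n : ℕ} (comp prof : Fin n → α → α → Prop) : Prop :=
  ∀ i, IsStrictTotalOrder α (comp i) ∧ ∀ x y, prof i x y → comp i x y

/-- `L` is a completion of the partial agenda `B`: `L` is an agenda (a linear order on all
alternatives, given as a duplicate-free exhaustive list) extending `B`. -/
def AgendaCompletes {α : Type*} [DecidableEq α] (L : List α) (B : α → α → Prop) : Prop :=
  L.Nodup ∧ (∀ a : α, a ∈ L) ∧ ∀ x y, B x y → L.idxOf x < L.idxOf y

/-- `Prec L p`: the set of alternatives ordered before `p` by the agenda `L`. -/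
noncomputable def PrecL {α : Type*} [Fintype α] [DecidableEq α] (L : List α) (p : α) :
    Finset α :=
  Finset.univ.filter fun c => L.idxOf c < L.idxOf p

/-- `Succ L p`: the set of alternatives ordered after `p` by the agenda `L`. -/
noncomputable def SuccL {α : Type*} [Fintype α] [DecidableEq α] (L : List α) (p : α) :
    Finset α :=
  Finset.univ.filter fun c => L.idxOf p < L.idxOf c

/-- `Prec B p` for a partial agenda `B` (a strict partial order on the alternatives):
the set of alternatives ordered before `p` by `B`. -/
noncomputable def PrecB {α : Type*} [Fintype α] (B : α → α → Prop) (p : α) : Finset α :=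
  Finset.univ.filter fun c => B c p

/-- `Succ B p` for a partial agenda `B`: the set of alternatives ordered after `p`. -/
noncomputable def SuccB {α : Type*} [Fintype α] (B : α → α → Prop) (p : α) : Finset α :=
  Finset.univ.filter fun c => B p c

/-- Every strict order on a finite type has an agenda completing it. -/
lemma exists_agendaCompletes {α : Type*} [Fintype α] [DecidableEq α]
    (R : α → α → Prop) (hR : IsStrictOrder α R) : ∃ L : List α, AgendaCompletes L R := by
  let _ : PartialOrder α := partialOrderOfSO R
  obtain ⟨s, hs, hle⟩ := extend_partialOrder (α := α) (· ≤ ·)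
  refine ⟨Finset.univ.sort s, Finset.sort_nodup _ _, fun a => by simp, fun x y hxy => ?_⟩
  have hlt : x < y := hxy
  by_contra! h
  have hsorted : (Finset.univ.sort s).Pairwise s := Finset.pairwise_sort _ _
  have hx : (Finset.univ.sort s).idxOf x < (Finset.univ.sort s).length :=
    List.idxOf_lt_length_iff.2 (by simp)
  have hy : (Finset.univ.sort s).idxOf y < (Finset.univ.sort s).length :=
    List.idxOf_lt_length_iff.2 (by simp)
  rcases h.lt_or_eq with h | h
  · have hyx := List.pairwise_iff_getElem.1 hsorted _ _ hy hx h
    rw [List.getElem_idxOf, List.getElem_idxOf] at hyx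
    exact hlt.ne (antisymm_of s (hle _ _ hlt.le) hyx)
  · exact hlt.ne' ((List.idxOf_inj (by simp)).1 h)

/-- A partial agenda has a completion in which only the alternatives that must come after `c`
do so. -/
lemma exists_agendaCompletes_succL_subset {α : Type*} [Fintype α] [DecidableEq α]
    (B : α → α → Prop) (hB : IsStrictOrder α B) (c : α) :
    ∃ L : List α, AgendaCompletes L B ∧ SuccL L c ⊆ SuccB B c := by
  have hclosed : ∀ x y, B x y → (x = c ∨ B c x) → (y = c ∨ B c y) := by
    rintro x y hxy (rfl | hx)
    · exact Or.inr hxy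
    · exact Or.inr (hB.trans _ _ _ hx hxy)
  obtain ⟨L, hnodup, hmem, hext⟩ := exists_agendaCompletes
    (fun x y => B x y ∨ (¬(x = c ∨ B c x) ∧ (y = c ∨ B c y)))
    { irrefl := by
        rintro x (h | ⟨h, h'⟩)
        · exact hB.irrefl x h
        · exact h h'
      trans := by
        rintro x y z (h | ⟨h, h'⟩) (k | ⟨k, k'⟩)
        · exact Or.inl (hB.trans _ _ _ h k)
        · exact Or.inr ⟨fun hx => k (hclosed _ _ h hx), k'⟩
        · exact Or.inr ⟨h, hclosed _ _ k h'⟩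
        · exact absurd h' k }
  refine ⟨L, ⟨hnodup, hmem, fun x y h => hext x y (Or.inl h)⟩, fun y hy => ?_⟩
  simp only [SuccL, SuccB, Finset.mem_filter, Finset.mem_univ, true_and] at hy ⊢
  by_contra hcy
  have hne : y ≠ c := by
    rintro rfl
    exact lt_irrefl _ hy
  exact lt_asymm hy (hext y c (Or.inr ⟨by simp [hne, hcy], Or.inl rfl⟩))

/-- A majority winner remains one on a smaller set of alternatives. -/
lemma IsMajWinner.mono {α : Type*} {n : ℕ} {prof : Fin n → α → α → Prop} {S T : Finset α} {a : α}
    (h : IsMajWinner prof T a) (hST : S ⊆ T) : IsMajWinner prof S a := by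
  unfold IsMajWinner at h ⊢
  refine lt_of_lt_of_le h (Nat.mul_le_mul_left 2 (Finset.card_le_card fun i hi => ?_))
  simp only [Finset.mem_filter, Finset.mem_univ, true_and] at hi ⊢
  exact fun c hc => hi c (hST hc)

/-- Two distinct alternatives cannot each be a majority winner on a set containing the other. -/
lemma IsMajWinner.eq_of_mem {α : Type*} {n : ℕ} {prof : Fin n → α → α → Prop}
    (hprof : ∀ i, IsStrictOrder α (prof i)) {S T : Finset α} {a b : α}
    (ha : IsMajWinner prof S a) (hb : IsMajWinner prof T b) (hbS : b ∈ S) (haT : a ∈ T) :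
    a = b := by
  by_contra hab
  unfold IsMajWinner at ha hb
  have hdisj : Disjoint (Finset.univ.filter fun i => ∀ c ∈ S, c ≠ a → prof i a c)
      (Finset.univ.filter fun i => ∀ c ∈ T, c ≠ b → prof i b c) := by
    refine Finset.disjoint_left.2 fun i hi hi' => ?_
    simp only [Finset.mem_filter, Finset.mem_univ, true_and] at hi hi'
    exact (hprof i).irrefl a ((hprof i).trans _ _ _ (hi b hbS (Ne.symm hab)) (hi' a haT hab))
  have hcard := Finset.card_le_univ (Finset.disjUnion _ _ hdisj)
  rw [Finset.card_disjUnion, Fintype.card_fin] at hcard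
  omega

/-- Suppose that in every completion of the partial profile, `p` is an
`(A ∖ Prec_B(p))`-majority winner. Then there are completions `comp` of the profile and
`L` of the partial agenda such that some `c ∈ Prec_L(p)` is a `(Succ_L(c) ∪ {c})`-majority
winner iff there are an alternative `c ∈ Prec_B(p)` and a completion `comp` of the profile
in which `c` is a `(Succ_B(c) ∪ {c})`-majority winner. -/
theorem stmt15 {α : Type*} [Fintype α] [DecidableEq α] {n : ℕ}
    (prof : Fin n → α → α → Prop) (hpo : ∀ i, IsStrictOrder α (prof i))
    (B : α → α → Prop) (hB : IsStrictOrder α B) (p : α)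
    (hmaj : ∀ comp : Fin n → α → α → Prop, Completes comp prof →
      IsMajWinner comp (Finset.univ \ PrecB B p) p) :
    (∃ (comp : Fin n → α → α → Prop) (L : List α),
      Completes comp prof ∧ AgendaCompletes L B ∧
      ∃ c ∈ PrecL L p, IsMajWinner comp (insert c (SuccL L c)) c) ↔
    (∃ c ∈ PrecB B p, ∃ comp : Fin n → α → α → Prop, Completes comp prof ∧
      IsMajWinner comp (insert c (SuccB B c)) c) := by
  constructor
  · rintro ⟨comp, L, hcomp, ⟨-, -, hext⟩, c, hc, hwin⟩
    simp only [PrecL, Finset.mem_filter, Finset.mem_univ, true_and] at hc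
    refine ⟨c, ?_, comp, hcomp, hwin.mono (Finset.insert_subset_insert _ fun y hy => ?_)⟩
    · by_contra hcB
      have hcp : c = p := hwin.eq_of_mem (fun i => (hcomp i).1.toIsStrictOrder)
        (hmaj comp hcomp) (by simp [SuccL, hc]) (by simp [hcB])
      exact lt_irrefl _ (hcp ▸ hc)
    · simp only [SuccL, SuccB, Finset.mem_filter, Finset.mem_univ, true_and] at hy ⊢
      exact hext c y hy
  · rintro ⟨c, hc, comp, hcomp, hwin⟩
    obtain ⟨L, hL, hsub⟩ := exists_agendaCompletes_succL_subset B hB c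
    simp only [PrecB, Finset.mem_filter, Finset.mem_univ, true_and] at hc
    exact ⟨comp, L, hcomp, hL, c, by simpa [PrecL] using hL.2.2 c p hc,
      hwin.mono (Finset.insert_subset_insert _ hsub)⟩
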